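/- arXiv:1910.00173 — 2 statements merged into one kernel-verified Lean document; each statement's English description precedes it below -/
import Mathlib

section
/- There is an absolute constant C such that for every α ∈ (0, 1/1000], every integer 0 ≤ m ≤ 3, every λ with (γ−σ)/2 ≤ λ ≤ 1/2, and every m-times continuously differentiable f with compact support contained in (0,∞)×(0,π/2): ‖f‖_{H^m(ψ)} ≤ C ‖f‖_{H^m} and ‖sin(β)^λ f‖_{H^m} ≤ C ‖f‖_{H^m(ψ)}. -/
open Real MeasureTheory Set

noncomputable section

namespace Paper

/-- The domain `(0,∞) × (0,π/2)` in the `(R,β)` variables. -/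
def Qdom : Set (ℝ × ℝ) := Set.Ioi (0:ℝ) ×ˢ Set.Ioo (0:ℝ) (Real.pi/2)

/-- Inner product `⟨f,g⟩ = ∫₀^∞ ∫₀^{π/2} f g dβ dR`. -/
def inner2 (f g : ℝ → ℝ → ℝ) : ℝ :=
  ∫ R in Set.Ioi (0:ℝ), ∫ β in Set.Ioo (0:ℝ) (Real.pi/2), f R β * g R β

/-- The `L²` norm `‖f‖₂`. -/
def norm2 (f : ℝ → ℝ → ℝ) : ℝ := Real.sqrt (inner2 f f)

/-- `‖h‖_{L²(R)}` for functions of `R` alone. -/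
def normR (h : ℝ → ℝ) : ℝ := Real.sqrt (∫ R in Set.Ioi (0:ℝ), (h R)^2)

/-- `D_R = R ∂_R`. -/
def DR (f : ℝ → ℝ → ℝ) : ℝ → ℝ → ℝ := fun R β => R * deriv (fun r => f r β) R

/-- `D_R` for functions of `R` alone. -/
def DR1 (h : ℝ → ℝ) : ℝ → ℝ := fun R => R * deriv h R

/-- `D_β = sin(2β) ∂_β`. -/
def Dbeta (f : ℝ → ℝ → ℝ) : ℝ → ℝ → ℝ :=
  fun R β => Real.sin (2*β) * deriv (fun b => f R b) β

/-- `L₁₂(Ω)(R) = ∫_R^∞ ∫₀^{π/2} Ω(s,β) sin(2β) s⁻¹ dβ ds`. -/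
def L12 (Ω : ℝ → ℝ → ℝ) (R : ℝ) : ℝ :=
  ∫ s in Set.Ioi R, ∫ β in Set.Ioo (0:ℝ) (Real.pi/2), Ω s β * Real.sin (2*β) / s

/-- `L̃₁₂(Ω)(R) = L₁₂(Ω)(R) − L₁₂(Ω)(0)`. -/
def tL12 (Ω : ℝ → ℝ → ℝ) (R : ℝ) : ℝ := L12 Ω R - L12 Ω 0

/-- Compact support contained in the open domain `(0,∞)×(0,π/2)`. -/
def suppIn (f : ℝ → ℝ → ℝ) : Prop :=
  ∃ K : Set (ℝ × ℝ), IsCompact K ∧ K ⊆ Qdom ∧ ∀ x y : ℝ, (x, y) ∉ K → f x y = 0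

/-- Integrability over the domain. -/
def Integrable2 (f : ℝ → ℝ → ℝ) : Prop :=
  MeasureTheory.IntegrableOn (Function.uncurry f) Qdom

/-- `Γ(β) = (cos β)^α`. -/
def Γf (α : ℝ) (β : ℝ) : ℝ := Real.cos β ^ α

/-- The normalizing constant `c = (2/π)∫₀^{π/2} Γ(β) sin(2β) dβ`. -/
def cst (α : ℝ) : ℝ :=
  (2/Real.pi) * ∫ β in Set.Ioo (0:ℝ) (Real.pi/2), Γf α β * Real.sin (2*β)

/-- The approximate profile `Ω̄`. -/
def Ωbar (α : ℝ) : ℝ → ℝ → ℝ := fun R β => (α / cst α) * Γf α β * (3*R/(1+R)^2)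

/-- The approximate profile `η̄`. -/
def ηbar (α : ℝ) : ℝ → ℝ → ℝ := fun R β => (α / cst α) * Γf α β * (6*R/(1+R)^3)

/-- The singular weight `φ₁ = (1+R)⁴R⁻⁴ sin(2β)^{-σ}`, `σ = 99/100`. -/
def phi1 : ℝ → ℝ → ℝ := fun R β => (1+R)^4 / R^4 * Real.sin (2*β) ^ (-(99/100 : ℝ))

/-- The singular weight `φ₂ = (1+R)⁴R⁻⁴ sin(2β)^{-γ}`, `γ = 1 + α/10`. -/
def phi2 (α : ℝ) : ℝ → ℝ → ℝ := fun R β => (1+R)^4 / R^4 * Real.sin (2*β) ^ (-(1 + α/10))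

/-- The singular weight `ψ₁ = (1+R)⁴R⁻⁴ (sin β cos β)^{-σ}`. -/
def psi1 : ℝ → ℝ → ℝ := fun R β =>
  (1+R)^4 / R^4 * (Real.sin β * Real.cos β) ^ (-(99/100 : ℝ))

/-- The singular weight `ψ₂ = (1+R)⁴R⁻⁴ (sin β)^{-σ}(cos β)^{-γ}`. -/
def psi2 (α : ℝ) : ℝ → ℝ → ℝ := fun R β =>
  (1+R)^4 / R^4 * Real.sin β ^ (-(99/100 : ℝ)) * Real.cos β ^ (-(1 + α/10))

/-- `c_ω = −(2/(πα)) L₁₂(Ω)(0)`. -/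
def cω (α : ℝ) (Ω : ℝ → ℝ → ℝ) : ℝ := -(2/(Real.pi*α)) * L12 Ω 0

/-- The linearized operator `L₁`. -/
def opL1 (α : ℝ) (Ω η : ℝ → ℝ → ℝ) : ℝ → ℝ → ℝ := fun R β =>
  - DR Ω R β - (3/(1+R)) * Dbeta Ω R β - Ω R β + η R β
  + cω α Ω * (Ωbar α R β - DR (Ωbar α) R β)

/-- The linearized operator `L₂`. -/
def opL2 (α : ℝ) (Ω η : ℝ → ℝ → ℝ) : ℝ → ℝ → ℝ := fun R β =>
  - DR η R β - (3/(1+R)) * Dbeta η R β + (-2 + 3/(1+R)) * η R β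
  + (2/(Real.pi*α)) * tL12 Ω R * ηbar α R β
  + cω α Ω * (ηbar α R β - DR (ηbar α) R β)

/-- `ξ̄` in Cartesian variables. -/
def ξbarC (α : ℝ) (x y : ℝ) : ℝ :=
  -(18*α^2 / cst α) * ∫ z in Set.Ioo (0:ℝ) x,
      (y/(y^2+z^2)) * (z ^ α * (z^2+y^2) ^ (α/2) / (1 + (z^2+y^2) ^ (α/2))^4)

/-- `ξ̄` in the `(R,β)` variables, via `x = R^{1/α} cos β`, `y = R^{1/α} sin β`. -/
def ξbar (α : ℝ) : ℝ → ℝ → ℝ := fun R β =>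
  ξbarC α (R ^ (1/α) * Real.cos β) (R ^ (1/α) * Real.sin β)

/-- The linearized operator `L₃`. -/
def opL3 (α : ℝ) (Ω ξ : ℝ → ℝ → ℝ) : ℝ → ℝ → ℝ := fun R β =>
  - DR ξ R β - (3/(1+R)) * Dbeta ξ R β + (-2 - 3/(1+R)) * ξ R β
  - (2/(Real.pi*α)) * tL12 Ω R * ξbar α R β
  + cω α Ω * (3 * ξbar α R β - DR (ξbar α) R β)

/-- Weighted Sobolev norm `H^m` with radial weight `w1` and angular weight `w2`:
`‖f‖ = Σ_{0≤k≤m} ‖(D_R^k f)√w1‖₂ + Σ_{i+j≤m−1} ‖(D_R^i D_β^{j+1} f)√w2‖₂`. -/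
def Hnorm (m : ℕ) (w1 w2 : ℝ → ℝ → ℝ) (f : ℝ → ℝ → ℝ) : ℝ :=
  (∑ k ∈ Finset.range (m+1),
    norm2 (fun R β => DR^[k] f R β * Real.sqrt (w1 R β)))
  + ∑ p ∈ (Finset.range (m+1) ×ˢ Finset.range (m+1)).filter
      (fun p => p.1 + p.2 + 1 ≤ m),
      norm2 (fun R β => DR^[p.1] (Dbeta^[p.2+1] f) R β * Real.sqrt (w2 R β))

/-- Sup of `|f|` over the domain `(0,∞)×(0,π/2)`. -/
def supDom (f : ℝ → ℝ → ℝ) : ℝ :=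
  ⨆ (R : Set.Ioi (0:ℝ)) (β : Set.Ioo (0:ℝ) (Real.pi/2)), |f R.1 β.1|

/-- The weighted `C¹` norm. -/
def C1norm (α : ℝ) (f : ℝ → ℝ → ℝ) : ℝ :=
  supDom f + supDom (fun R β => (1+R)/R * DR f R β)
  + supDom (fun R β =>
      (1 + (R * Real.sin (2*β) ^ α) ^ (-(1/40 : ℝ))) * Dbeta f R β)

/-- Boundedness of `f` on the domain. -/
def BddDom (f : ℝ → ℝ → ℝ) : Prop :=
  ∃ M : ℝ, ∀ R ∈ Set.Ioi (0:ℝ), ∀ β ∈ Set.Ioo (0:ℝ) (Real.pi/2), |f R β| ≤ M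

/-- Finiteness of the weighted `C¹` norm. -/
def C1Fin (α : ℝ) (f : ℝ → ℝ → ℝ) : Prop :=
  BddDom f ∧ BddDom (fun R β => (1+R)/R * DR f R β) ∧
  BddDom (fun R β => (1 + (R * Real.sin (2*β) ^ α) ^ (-(1/40 : ℝ))) * Dbeta f R β)

/-- The weighted `W^{l,∞}` norm. -/
def Wnorm (α : ℝ) (l : ℕ) (f : ℝ → ℝ → ℝ) : ℝ :=
  (∑ k ∈ Finset.range (l+1), supDom (DR^[k] f))
  + ∑ p ∈ (Finset.range (l+1) ×ˢ Finset.range (l+1)).filter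
      (fun p => p.1 + p.2 ≤ l ∧ 1 ≤ p.2),
      supDom (fun R β => Real.sin (2*β) ^ (-(α/5)) *
        DR^[p.1] (fun R' β' => Dbeta^[p.2] f R' β' / (α/10 + Real.sin (2*β'))) R β)

/-- Finiteness of the `W^{l,∞}` norm. -/
def WFin (α : ℝ) (l : ℕ) (f : ℝ → ℝ → ℝ) : Prop :=
  (∀ k ≤ l, BddDom (DR^[k] f)) ∧
  ∀ k j : ℕ, k + j ≤ l → 1 ≤ j →
    BddDom (fun R β => Real.sin (2*β) ^ (-(α/5)) *
      DR^[k] (fun R' β' => Dbeta^[j] f R' β' / (α/10 + Real.sin (2*β'))) R β)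

/-- `I(f)(x,y) = ∫₀ˣ f(z,y)/z dz`. -/
def Ifun (f : ℝ → ℝ → ℝ) : ℝ → ℝ → ℝ := fun x y => ∫ z in Set.Ioo (0:ℝ) x, f z y / z

/-- `D_S g = (1/α)(z ∂_z g + y ∂_y g)` in Cartesian variables. -/
def DScart (α : ℝ) (g : ℝ → ℝ → ℝ) : ℝ → ℝ → ℝ := fun a b =>
  (1/α) * (a * deriv (fun a' => g a' b) a + b * deriv (fun b' => g a b') b)

/-- `D_τ g = 2y ∂_y g − 2α (y²/(y²+z²)) D_S g` in Cartesian variables. -/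
def DTcart (α : ℝ) (g : ℝ → ℝ → ℝ) : ℝ → ℝ → ℝ := fun a b =>
  2*b * deriv (fun b' => g a b') b - 2*α*(b^2/(b^2+a^2)) * DScart α g a b

/-!
`D_R` and `D_β` are derivations and `D_R` annihilates functions of `β`, so by the Leibniz rule the
norm of `a(β) f` is bounded through pointwise bounds for `D_β^k a` against ratios of weights. The
only delicate term of `D_β^{n+1} (a f)` is `(D_β^{n+1} a) f`: it is measured with an angular weight,
but has to be absorbed by a norm of `f` with the radial weight, and `ψ₂ / ψ₁` blows up like a
negative power of `cos β`. For `a = 1` the term vanishes. For `a = sin^λ` one has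
`D_β^{n+1} sin^λ = sin^λ · cos² · r_n(λ, β)` with `r_n` smooth on all of `ℝ²`: the factor `cos²`
absorbs the blow-up, `sin^λ` turns `φ₂` into `ψ₂` because `2λ ≥ γ - σ`, and compactness bounds `r_n`
uniformly in `λ`.
-/

open Finset.HasAntidiagonal (antidiagonal mem_antidiagonal)

section FieldDeriv

variable {𝕜 : Type*} [NontriviallyNormedField 𝕜] {b g h : 𝕜 → 𝕜} {U : Set 𝕜} {x : 𝕜}
  {k m n : ℕ}

/-- The derivative of `h` along the vector field `b ∂ₓ` on the line. With one of the variables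
`R`, `β` frozen, both `D_R` and `D_β` are of this form. -/
def fieldDeriv (b h : 𝕜 → 𝕜) : 𝕜 → 𝕜 := fun x => b x * deriv h x

lemma fieldDeriv_congr (hU : IsOpen U) (hgh : EqOn g h U) (hx : x ∈ U) :
    fieldDeriv b g x = fieldDeriv b h x := by
  rw [fieldDeriv, fieldDeriv, (hgh.eventuallyEq_of_mem (hU.mem_nhds hx)).deriv_eq]

lemma iterate_succ_fieldDeriv_const (b : 𝕜 → 𝕜) (c : 𝕜) (k : ℕ) :
    (fieldDeriv b)^[k + 1] (fun _ => c) = 0 := by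
  have hconst (c : 𝕜) : fieldDeriv b (fun _ => c) = fun _ => 0 := by
    funext x
    simp [fieldDeriv]
  rw [Function.iterate_succ_apply, hconst]
  exact Function.iterate_fixed (hconst 0) k

lemma contDiffOn_iterate_fieldDeriv (hU : IsOpen U) (hb : ContDiffOn 𝕜 n b U)
    (hh : ContDiffOn 𝕜 n h U) (hkm : k + m ≤ n) :
    ContDiffOn 𝕜 m ((fieldDeriv b)^[k] h) U := by
  induction k generalizing m with
  | zero => exact hh.of_le (by exact_mod_cast (by lia : m ≤ n))
  | succ k ih =>
    rw [Function.iterate_succ_apply']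
    exact (hb.of_le (by exact_mod_cast (by lia : m ≤ n))).mul
      ((ih (m := m + 1) (by lia)).deriv_of_isOpen hU (by norm_cast))

lemma differentiableAt_iterate_fieldDeriv (hU : IsOpen U) (hb : ContDiffOn 𝕜 n b U)
    (hh : ContDiffOn 𝕜 n h U) (hk : k < n) (hx : x ∈ U) :
    DifferentiableAt 𝕜 ((fieldDeriv b)^[k] h) x :=
  ((contDiffOn_iterate_fieldDeriv (m := 1) hU hb hh hk).differentiableOn (by simp)).differentiableAt
    (hU.mem_nhds hx)

theorem iterate_fieldDeriv_mul (hU : IsOpen U) (hb : ContDiffOn 𝕜 n b U)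
    (hg : ContDiffOn 𝕜 n g U) (hh : ContDiffOn 𝕜 n h U) (hx : x ∈ U) :
    (fieldDeriv b)^[n] (fun y => g y * h y) x = ∑ p ∈ antidiagonal n,
      (n.choose p.1 : 𝕜) * ((fieldDeriv b)^[p.1] g x * (fieldDeriv b)^[p.2] h x) := by
  induction n generalizing x with
  | zero => simp
  | succ n ih =>
    have hle : (n : WithTop ℕ∞) ≤ (n + 1 : ℕ) := by exact_mod_cast n.le_succ
    have hderiv : HasDerivAt (fun y => ∑ p ∈ antidiagonal n,
        (n.choose p.1 : 𝕜) * ((fieldDeriv b)^[p.1] g y * (fieldDeriv b)^[p.2] h y))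
        (∑ p ∈ antidiagonal n, (n.choose p.1 : 𝕜) *
          (deriv ((fieldDeriv b)^[p.1] g) x * (fieldDeriv b)^[p.2] h x +
            (fieldDeriv b)^[p.1] g x * deriv ((fieldDeriv b)^[p.2] h) x)) x := by
      refine HasDerivAt.fun_sum fun p hp => ?_
      have hp' := mem_antidiagonal.1 hp
      exact ((differentiableAt_iterate_fieldDeriv hU hb hg (by lia) hx).hasDerivAt.mul
        (differentiableAt_iterate_fieldDeriv hU hb hh (by lia) hx).hasDerivAt).const_mul _
    rw [Function.iterate_succ_apply', fieldDeriv_congr hU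
      (fun y hy => ih (hb.of_le hle) (hg.of_le hle) (hh.of_le hle) hy) hx, fieldDeriv,
      hderiv.deriv, Finset.sum_antidiagonal_choose_succ_mul
        (fun i j => (fieldDeriv b)^[i] g x * (fieldDeriv b)^[j] h x),
      ← Finset.sum_add_distrib, Finset.mul_sum]
    refine Finset.sum_congr rfl fun p hp => ?_
    rw [← Nat.choose_symm_of_eq_add (mem_antidiagonal.1 hp).symm]
    simp only [Function.iterate_succ_apply', fieldDeriv]
    ring

lemma iterate_fieldDeriv_sum {ι : Type*} {s : Finset ι} {c : ι → 𝕜} {F : ι → 𝕜 → 𝕜}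
    (hU : IsOpen U) (hb : ContDiffOn 𝕜 n b U) (hF : ∀ l ∈ s, ContDiffOn 𝕜 n (F l) U) (hx : x ∈ U) :
    (fieldDeriv b)^[n] (fun y => ∑ l ∈ s, c l * F l y) x =
      ∑ l ∈ s, c l * (fieldDeriv b)^[n] (F l) x := by
  induction n generalizing x with
  | zero => rfl
  | succ n ih =>
    have hle : (n : WithTop ℕ∞) ≤ (n + 1 : ℕ) := by exact_mod_cast n.le_succ
    have hderiv := HasDerivAt.fun_sum fun l hl =>
      (differentiableAt_iterate_fieldDeriv hU hb (hF l hl) n.lt_succ_self hx).hasDerivAt.const_mul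
        (c l)
    simp only [Function.iterate_succ_apply']
    rw [fieldDeriv_congr hU
      (fun y hy => ih (hb.of_le hle) (fun l hl => (hF l hl).of_le hle) hy) hx, fieldDeriv,
      hderiv.deriv, Finset.mul_sum]
    exact Finset.sum_congr rfl fun l _ => mul_left_comm _ _ _

end FieldDeriv

section ReducedDomain

variable {f g h : ℝ → ℝ → ℝ} {i j m n : ℕ} {R β : ℝ}

/-- `D_β` for functions of `β` alone. -/
def angularDeriv : (ℝ → ℝ) → ℝ → ℝ := fieldDeriv fun β => sin (2 * β)

lemma iterate_DR_apply (f : ℝ → ℝ → ℝ) (i : ℕ) (R β : ℝ) :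
    DR^[i] f R β = (fieldDeriv id)^[i] (fun r => f r β) R :=
  congrFun (Function.Semiconj.iterate_right (f := fun (f : ℝ → ℝ → ℝ) r => f r β)
    (ga := DR) (gb := fieldDeriv id) (fun _ => rfl) i f) R

lemma iterate_Dbeta_apply (f : ℝ → ℝ → ℝ) (j : ℕ) (R : ℝ) :
    Dbeta^[j] f R = angularDeriv^[j] (f R) :=
  Function.Semiconj.iterate_right (f := fun f : ℝ → ℝ → ℝ => f R) (gb := angularDeriv)
    (fun _ => rfl) j f

lemma contDiff_DR {n : WithTop ℕ∞} (hf : ContDiff ℝ (n + 1) (Function.uncurry f)) :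
    ContDiff ℝ n (Function.uncurry (DR f)) := by
  have hDR : Function.uncurry (DR f) = fun p => p.1 * fderiv ℝ (Function.uncurry f) p (1, 0) := by
    funext ⟨R, β⟩
    have hderiv := ((hf.differentiable (by simp) (R, β)).hasFDerivAt.comp_hasDerivAt R
      ((hasDerivAt_id R).prodMk (hasDerivAt_const R β))).deriv
    exact congrArg (R * ·) hderiv
  rw [hDR]
  exact contDiff_fst.mul ((hf.fderiv_right le_rfl).clm_apply contDiff_const)

lemma contDiff_Dbeta {n : WithTop ℕ∞} (hf : ContDiff ℝ (n + 1) (Function.uncurry f)) :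
    ContDiff ℝ n (Function.uncurry (Dbeta f)) := by
  have hDbeta : Function.uncurry (Dbeta f) =
      fun p => sin (2 * p.2) * fderiv ℝ (Function.uncurry f) p (0, 1) := by
    funext ⟨R, β⟩
    have hderiv := ((hf.differentiable (by simp) (R, β)).hasFDerivAt.comp_hasDerivAt β
      ((hasDerivAt_const β R).prodMk (hasDerivAt_id β))).deriv
    exact congrArg (sin (2 * β) * ·) hderiv
  rw [hDbeta]
  exact (contDiff_const.mul contDiff_snd).sin.mul
    ((hf.fderiv_right le_rfl).clm_apply contDiff_const)

lemma contDiff_iterate_DR (hf : ContDiff ℝ (n + i : ℕ) (Function.uncurry f)) :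
    ContDiff ℝ n (Function.uncurry (DR^[i] f)) := by
  induction i generalizing f with
  | zero => exact hf
  | succ i ih => exact ih (contDiff_DR (by exact_mod_cast hf))

lemma contDiff_iterate_Dbeta (hf : ContDiff ℝ (n + j : ℕ) (Function.uncurry f)) :
    ContDiff ℝ n (Function.uncurry (Dbeta^[j] f)) := by
  induction j generalizing f with
  | zero => exact hf
  | succ j ih => exact ih (contDiff_Dbeta (by exact_mod_cast hf))

lemma suppIn_DR (hf : suppIn f) : suppIn (DR f) := by
  obtain ⟨K, hK, hKQ, hfK⟩ := hf
  refine ⟨K, hK, hKQ, fun R β hRβ => ?_⟩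
  have hzero : ∀ᶠ r in nhds R, f r β = 0 :=
    ((hK.isClosed.isOpen_compl.preimage (Continuous.prodMk_left β)).eventually_mem hRβ).mono
      fun r hr => hfK r β hr
  simp [DR, Filter.EventuallyEq.deriv_eq (f := fun _ => (0 : ℝ)) hzero]

lemma suppIn_Dbeta (hf : suppIn f) : suppIn (Dbeta f) := by
  obtain ⟨K, hK, hKQ, hfK⟩ := hf
  refine ⟨K, hK, hKQ, fun R β hRβ => ?_⟩
  have hzero : ∀ᶠ b in nhds β, f R b = 0 :=
    ((hK.isClosed.isOpen_compl.preimage (Continuous.prodMk_right R)).eventually_mem hRβ).mono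
      fun b hb => hfK R b hb
  simp [Dbeta, Filter.EventuallyEq.deriv_eq (f := fun _ => (0 : ℝ)) hzero]

lemma suppIn_iterate_DR_iterate_Dbeta (hf : suppIn f) (i j : ℕ) :
    suppIn (DR^[i] (Dbeta^[j] f)) :=
  Function.Iterate.rec suppIn (Function.Iterate.rec suppIn hf (fun _ => suppIn_Dbeta) j)
    (fun _ => suppIn_DR) i

theorem iterate_DR_iterate_Dbeta_mul {a : ℝ → ℝ} (ha : ContDiffOn ℝ n a (Ioo 0 (π / 2)))
    (hf : ContDiff ℝ (i + n : ℕ) (Function.uncurry f)) (hβ : β ∈ Ioo 0 (π / 2)) :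
    DR^[i] (Dbeta^[n] fun R β => a β * f R β) R β = ∑ p ∈ antidiagonal n,
      (n.choose p.1 * angularDeriv^[p.1] a β) * DR^[i] (Dbeta^[p.2] f) R β := by
  have hleibniz (r : ℝ) : Dbeta^[n] (fun R β => a β * f R β) r β =
      ∑ p ∈ antidiagonal n,
        (n.choose p.1 * angularDeriv^[p.1] a β) * Dbeta^[p.2] f r β := by
    have hfr : ContDiff ℝ n (f r) :=
      (hf.comp (contDiff_prodMk_right r)).of_le (by exact_mod_cast Nat.le_add_left n i)
    simp only [iterate_Dbeta_apply, mul_assoc]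
    exact iterate_fieldDeriv_mul isOpen_Ioo (by fun_prop) ha hfr.contDiffOn hβ
  simp only [iterate_DR_apply _ i, hleibniz]
  refine iterate_fieldDeriv_sum isOpen_univ contDiffOn_id (fun p hp => ?_) (mem_univ R)
  have hp' : p.2 ≤ n := by have := mem_antidiagonal.1 hp; lia
  have hDf : ContDiff ℝ i (Function.uncurry (Dbeta^[p.2] f)) :=
    contDiff_iterate_Dbeta (hf.of_le (by exact_mod_cast Nat.add_le_add_left hp' i))
  exact (hDf.comp (contDiff_prodMk_left β)).contDiffOn

end ReducedDomain


section L2Norm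

variable {g h T : ℝ → ℝ → ℝ}

lemma memLp_mul_sqrt {w : ℝ → ℝ → ℝ} (hg : Continuous (Function.uncurry g)) (hg_supp : suppIn g)
    (hw : ContinuousOn (Function.uncurry w) Qdom) :
    MemLp (Function.uncurry fun R β => g R β * √(w R β)) 2 (volume.restrict Qdom) := by
  obtain ⟨K, hK, hKQ, hgK⟩ := hg_supp
  have hQ : IsOpen Qdom := isOpen_Ioi.prod isOpen_Ioo
  have hzero (p : ℝ × ℝ) (hp : p ∉ K) : Function.uncurry (fun R β => g R β * √(w R β)) p = 0 := by
    simp [Function.uncurry, hgK _ _ hp]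
  have htsupport : tsupport (Function.uncurry fun R β => g R β * √(w R β)) ⊆ Qdom :=
    (closure_minimal (Function.support_subset_iff'.2 hzero) hK.isClosed).trans hKQ
  exact ((hg.continuousOn.mul hw.sqrt).continuous_of_tsupport_subset hQ
    htsupport).memLp_of_hasCompactSupport (HasCompactSupport.intro hK hzero) |>.restrict _

lemma norm2_nonneg (g : ℝ → ℝ → ℝ) : 0 ≤ norm2 g := sqrt_nonneg _

lemma norm2_eq_lpNorm (hg : MemLp (Function.uncurry g) 2 (volume.restrict Qdom)) :
    norm2 g = lpNorm (Function.uncurry g) 2 (volume.restrict Qdom) := by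
  have hint : IntegrableOn (fun p : ℝ × ℝ => g p.1 p.2 * g p.1 p.2) Qdom :=
    hg.integrable_mul hg
  rw [lpNorm_eq_integral_norm_rpow_toReal (by simp) (by simp) hg.1, norm2, inner2,
    ← setIntegral_prod (fun p : ℝ × ℝ => g p.1 p.2 * g p.1 p.2) hint, sqrt_eq_rpow]
  simp [Function.uncurry, Qdom, ← sq, Measure.volume_eq_prod]

lemma norm2_mono (hT : MemLp (Function.uncurry T) 2 (volume.restrict Qdom))
    (hhT : ∀ R β, (R, β) ∈ Qdom → |h R β| ≤ |T R β|) : norm2 h ≤ norm2 T := by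
  have hint : Integrable (fun p : ℝ × ℝ => T p.1 p.2 * T p.1 p.2)
      ((volume.restrict (Ioi 0)).prod (volume.restrict (Ioo 0 (π / 2)))) := by
    rw [Measure.prod_restrict, ← Measure.volume_eq_prod]
    exact hT.integrable_mul hT
  have hmul (R : ℝ) (hR : R ∈ Ioi 0) (β : ℝ) (hβ : β ∈ Ioo 0 (π / 2)) :
      h R β * h R β ≤ T R β * T R β := abs_le_iff_mul_self_le.1 (hhT R β ⟨hR, hβ⟩)
  refine sqrt_le_sqrt (integral_mono_of_nonneg
    (.of_forall fun R => integral_nonneg fun β => mul_self_nonneg _) hint.integral_prod_left ?_)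
  filter_upwards [hint.prod_right_ae, ae_restrict_mem measurableSet_Ioi] with R hTR hR
  exact integral_mono_of_nonneg (.of_forall fun β => mul_self_nonneg _) hTR
    ((ae_restrict_mem measurableSet_Ioo).mono (hmul R hR))

theorem norm2_le_sum {ι : Type*} {s : Finset ι} {c : ι → ℝ} {F : ι → ℝ → ℝ → ℝ}
    (hc : ∀ l ∈ s, 0 ≤ c l)
    (hF : ∀ l ∈ s, MemLp (Function.uncurry (F l)) 2 (volume.restrict Qdom))
    (hhF : ∀ R β, (R, β) ∈ Qdom → |h R β| ≤ ∑ l ∈ s, c l * |F l R β|) :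
    norm2 h ≤ ∑ l ∈ s, c l * norm2 (F l) := by
  set T : ℝ → ℝ → ℝ := fun R β => ∑ l ∈ s, c l * |F l R β| with hT_def
  have hT_eq : Function.uncurry T = ∑ l ∈ s, c l • fun p => |Function.uncurry (F l) p| := by
    funext p
    simp [hT_def, Function.uncurry]
  have hterm (l) (hl : l ∈ s) :
      MemLp (c l • fun p => |Function.uncurry (F l) p|) 2 (volume.restrict Qdom) :=
    (hF l hl).abs.const_smul (c l)
  have hT : MemLp (Function.uncurry T) 2 (volume.restrict Qdom) :=
    hT_eq ▸ memLp_finsetSum' s hterm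
  calc norm2 h ≤ norm2 T := norm2_mono hT fun R β hRβ => (hhF R β hRβ).trans (le_abs_self _)
    _ = lpNorm (∑ l ∈ s, c l • fun p => |Function.uncurry (F l) p|) 2 (volume.restrict Qdom) := by
      rw [norm2_eq_lpNorm hT, hT_eq]
    _ ≤ ∑ l ∈ s, lpNorm (c l • fun p => |Function.uncurry (F l) p|) 2 (volume.restrict Qdom) :=
      lpNorm_sum_le hterm (by norm_num)
    _ = ∑ l ∈ s, c l * norm2 (F l) := Finset.sum_congr rfl fun l hl => by
      rw [lpNorm_const_smul, lpNorm_fun_abs (hF l hl).1, norm2_eq_lpNorm (hF l hl),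
        coe_nnnorm, norm_of_nonneg (hc l hl)]

end L2Norm

section AngularMultiplier

variable {f : ℝ → ℝ → ℝ} {a : ℝ → ℝ} {w w1 w2 w1' w2' : ℝ → ℝ → ℝ} {i j k m n : ℕ} {B N : ℝ}

/-- The summand `‖(D_R^i D_β^j f) w^{1/2}‖₂` of the weighted Sobolev norms. -/
def weightedNorm (i j : ℕ) (w f : ℝ → ℝ → ℝ) : ℝ :=
  norm2 fun R β => DR^[i] (Dbeta^[j] f) R β * √(w R β)

lemma Hnorm_eq_sum_weightedNorm (m : ℕ) (w1 w2 f : ℝ → ℝ → ℝ) :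
    Hnorm m w1 w2 f = ∑ k ∈ Finset.range (m + 1), weightedNorm k 0 w1 f +
      ∑ p ∈ (Finset.range (m + 1) ×ˢ Finset.range (m + 1)).filter (fun p => p.1 + p.2 + 1 ≤ m),
        weightedNorm p.1 (p.2 + 1) w2 f :=
  rfl

lemma weightedNorm_radial_le_Hnorm (hk : k ≤ m) : weightedNorm k 0 w1 f ≤ Hnorm m w1 w2 f :=
  (Finset.single_le_sum (f := fun k => weightedNorm k 0 w1 f) (fun _ _ => norm2_nonneg _)
    (Finset.mem_range_succ_iff.2 hk)).trans
    (le_add_of_nonneg_right (Finset.sum_nonneg fun _ _ => norm2_nonneg _))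

lemma weightedNorm_angular_le_Hnorm (hij : i + j + 1 ≤ m) :
    weightedNorm i (j + 1) w2 f ≤ Hnorm m w1 w2 f :=
  (Finset.single_le_sum (f := fun p : ℕ × ℕ => weightedNorm p.1 (p.2 + 1) w2 f)
    (fun _ _ => norm2_nonneg _) (a := (i, j)) (by simp; lia)).trans
    (le_add_of_nonneg_left (Finset.sum_nonneg fun _ _ => norm2_nonneg _))

lemma Hnorm_nonneg : 0 ≤ Hnorm m w1 w2 f :=
  (norm2_nonneg _).trans (weightedNorm_radial_le_Hnorm m.zero_le)

/-- Pointwise conditions under which multiplication by `a = a(β)` is bounded from the weighted space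
`H^m` with weights `w1', w2'` to the one with weights `w1, w2`. In the Leibniz expansion of
`D_β^{n+1} (a f)` the terms containing a `D_β`-derivative of `f` carry the weight `w2'`, while the
term without one only carries `w1'`; the latter is controlled by `mixed`. -/
structure IsAngularMultiplier (m : ℕ) (w1 w2 w1' w2' : ℝ → ℝ → ℝ) (B : ℝ) (a : ℝ → ℝ) : Prop where
  nonneg : 0 ≤ B
  contDiffOn : ContDiffOn ℝ m a (Ioo 0 (π / 2))
  radial : ∀ R β, (R, β) ∈ Qdom → a β ^ 2 * w1 R β ≤ B ^ 2 * w1' R β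
  angular : ∀ k ≤ m, ∀ R β, (R, β) ∈ Qdom →
    (angularDeriv^[k] a β) ^ 2 * w2 R β ≤ B ^ 2 * w2' R β
  mixed : ∀ k, 1 ≤ k → k ≤ m → ∀ R β, (R, β) ∈ Qdom →
    (angularDeriv^[k] a β) ^ 2 * w2 R β ≤ B ^ 2 * w1' R β

lemma abs_mul_sqrt_le_mul_sqrt {s t x y : ℝ} (ht : 0 ≤ t) (h : s ^ 2 * x ≤ t ^ 2 * y) :
    |s| * √x ≤ t * √y := by
  simpa [sqrt_mul (sq_nonneg _), sqrt_sq_eq_abs, abs_of_nonneg ht] using sqrt_le_sqrt h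

lemma memLp_iterate_DR_iterate_Dbeta_mul_sqrt (hf : ContDiff ℝ (i + j : ℕ) (Function.uncurry f))
    (hf_supp : suppIn f) (hw : ContinuousOn (Function.uncurry w) Qdom) :
    MemLp (Function.uncurry fun R β => DR^[i] (Dbeta^[j] f) R β * √(w R β)) 2
      (volume.restrict Qdom) :=
  memLp_mul_sqrt
    (contDiff_iterate_DR (n := 0) (contDiff_iterate_Dbeta (by simpa using hf))).continuous
    (suppIn_iterate_DR_iterate_Dbeta hf_supp i j) hw

lemma weightedNorm_mul_le {w' : ℕ → ℝ → ℝ → ℝ} (hB : 0 ≤ B)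
    (ha : ContDiffOn ℝ n a (Ioo 0 (π / 2))) (hf : ContDiff ℝ (i + n : ℕ) (Function.uncurry f))
    (hf_supp : suppIn f) (hw' : ∀ l ≤ n, ContinuousOn (Function.uncurry (w' l)) Qdom)
    (hbound : ∀ p ∈ antidiagonal n, ∀ R β, (R, β) ∈ Qdom →
      (angularDeriv^[p.1] a β) ^ 2 * w R β ≤ B ^ 2 * w' p.2 R β)
    (hN : ∀ l ≤ n, weightedNorm i l (w' l) f ≤ N) :
    weightedNorm i n w (fun R β => a β * f R β) ≤ 2 ^ n * (B * N) := by
  have hle {p : ℕ × ℕ} (hp : p ∈ antidiagonal n) : p.2 ≤ n := by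
    have := mem_antidiagonal.1 hp
    lia
  calc weightedNorm i n w (fun R β => a β * f R β)
      ≤ ∑ p ∈ antidiagonal n, (n.choose p.1 * B) * weightedNorm i p.2 (w' p.2) f := by
        refine norm2_le_sum (fun p _ => by positivity)
          (fun p hp => memLp_iterate_DR_iterate_Dbeta_mul_sqrt
            (hf.of_le (by exact_mod_cast Nat.add_le_add_left (hle hp) i)) hf_supp (hw' _ (hle hp)))
          fun R β hRβ => ?_
        rw [iterate_DR_iterate_Dbeta_mul ha hf hRβ.2, Finset.sum_mul]
        refine (Finset.abs_sum_le_sum_abs _ _).trans (Finset.sum_le_sum fun p hp => ?_)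
        have hweight := abs_mul_sqrt_le_mul_sqrt hB (hbound p hp R β hRβ)
        calc |n.choose p.1 * angularDeriv^[p.1] a β * DR^[i] (Dbeta^[p.2] f) R β * √(w R β)|
            = n.choose p.1 * |DR^[i] (Dbeta^[p.2] f) R β| *
                (|angularDeriv^[p.1] a β| * √(w R β)) := by
              simp only [abs_mul, Nat.abs_cast, abs_of_nonneg (sqrt_nonneg _)]
              ring
          _ ≤ n.choose p.1 * |DR^[i] (Dbeta^[p.2] f) R β| * (B * √(w' p.2 R β)) := by gcongr
          _ = n.choose p.1 * B * |DR^[i] (Dbeta^[p.2] f) R β * √(w' p.2 R β)| := by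
              rw [abs_mul, abs_of_nonneg (sqrt_nonneg _)]
              ring
    _ ≤ ∑ p ∈ antidiagonal n, (n.choose p.1 * B) * N := by
        gcongr with p hp
        exact hN _ (hle hp)
    _ = 2 ^ n * (B * N) := by
        rw [← Finset.sum_mul, ← Finset.sum_mul, Finset.Nat.sum_antidiagonal_eq_sum_range_succ_mk,
          ← Nat.cast_sum, Nat.sum_range_choose, Nat.cast_pow, Nat.cast_two, mul_assoc]

namespace IsAngularMultiplier

variable (h : IsAngularMultiplier m w1 w2 w1' w2' B a)
  (hf : ContDiff ℝ m (Function.uncurry f)) (hf_supp : suppIn f)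
  (hw1' : ContinuousOn (Function.uncurry w1') Qdom)
include h hf hf_supp hw1'

lemma weightedNorm_radial_le (hk : k ≤ m) :
    weightedNorm k 0 w1 (fun R β => a β * f R β) ≤ B * Hnorm m w1' w2' f := by
  have hbound := weightedNorm_mul_le (n := 0) (w' := fun _ => w1') (N := Hnorm m w1' w2' f) h.nonneg
    (h.contDiffOn.of_le (by simp)) (hf.of_le (by exact_mod_cast hk)) hf_supp (fun _ _ => hw1')
    (fun p hp R β hRβ => by
      obtain rfl : p = (0, 0) := by simpa using hp
      exact h.radial R β hRβ)
    (fun l hl => by simpa [Nat.le_zero.1 hl] using weightedNorm_radial_le_Hnorm hk)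
  simpa using hbound

lemma weightedNorm_angular_le (hw2' : ContinuousOn (Function.uncurry w2') Qdom)
    (hij : i + j + 1 ≤ m) :
    weightedNorm i (j + 1) w2 (fun R β => a β * f R β) ≤
      2 ^ (j + 1) * (B * Hnorm m w1' w2' f) := by
  refine weightedNorm_mul_le (w' := fun l => if l = 0 then w1' else w2') h.nonneg
    (h.contDiffOn.of_le (by exact_mod_cast (by lia : j + 1 ≤ m)))
    (hf.of_le (by exact_mod_cast hij)) hf_supp (fun l _ => ?_) (fun p hp R β hRβ => ?_)
    (fun l hl => ?_)
  · split_ifs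
    exacts [hw1', hw2']
  · have hp_sum := mem_antidiagonal.1 hp
    split_ifs with hp2
    exacts [h.mixed p.1 (by lia) (by lia) R β hRβ, h.angular p.1 (by lia) R β hRβ]
  · rcases l with _ | l
    · exact weightedNorm_radial_le_Hnorm (by lia)
    · exact weightedNorm_angular_le_Hnorm (by lia)

theorem Hnorm_mul_le (hw2' : ContinuousOn (Function.uncurry w2') Qdom) :
    Hnorm m w1 w2 (fun R β => a β * f R β) ≤
      ((m + 1) + (m + 1) ^ 2 * 2 ^ m) * (B * Hnorm m w1' w2' f) := by
  have hN : 0 ≤ B * Hnorm m w1' w2' f := mul_nonneg h.nonneg Hnorm_nonneg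
  set s := (Finset.range (m + 1) ×ˢ Finset.range (m + 1)).filter fun p => p.1 + p.2 + 1 ≤ m
  have hs : (s.card : ℝ) ≤ (m + 1) ^ 2 := by
    have hcard := Finset.card_filter_le (Finset.range (m + 1) ×ˢ Finset.range (m + 1))
      fun p => p.1 + p.2 + 1 ≤ m
    rw [Finset.card_product, Finset.card_range, ← sq] at hcard
    exact_mod_cast hcard
  have hradial := Finset.sum_le_card_nsmul (Finset.range (m + 1))
    (fun k => weightedNorm k 0 w1 fun R β => a β * f R β) (B * Hnorm m w1' w2' f) fun k hk =>
      h.weightedNorm_radial_le hf hf_supp hw1' (Finset.mem_range_succ_iff.1 hk)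
  have hangular := Finset.sum_le_card_nsmul s
    (fun p => weightedNorm p.1 (p.2 + 1) w2 fun R β => a β * f R β)
    (2 ^ m * (B * Hnorm m w1' w2' f)) fun p hp => by
      have hp' := (Finset.mem_filter.1 hp).2
      refine (h.weightedNorm_angular_le hf hf_supp hw1' hw2' hp').trans ?_
      gcongr
      exacts [one_le_two, by lia]
  calc Hnorm m w1 w2 (fun R β => a β * f R β)
      ≤ (m + 1) * (B * Hnorm m w1' w2' f) + s.card * (2 ^ m * (B * Hnorm m w1' w2' f)) := by
        rw [Hnorm_eq_sum_weightedNorm]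
        exact (add_le_add hradial hangular).trans_eq (by simp)
    _ ≤ (m + 1) * (B * Hnorm m w1' w2' f) +
          (m + 1) ^ 2 * (2 ^ m * (B * Hnorm m w1' w2' f)) := by gcongr
    _ = _ := by ring

lemma Hnorm_mul_le_of_le {M : ℕ} {B' : ℝ} (hw2' : ContinuousOn (Function.uncurry w2') Qdom)
    (hm : m ≤ M) (hB : B ≤ B') :
    Hnorm m w1 w2 (fun R β => a β * f R β) ≤
      ((M + 1) + (M + 1) ^ 2 * 2 ^ M) * B' * Hnorm m w1' w2' f := by
  have hB_nonneg := h.nonneg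
  have hN : 0 ≤ Hnorm m w1' w2' f := Hnorm_nonneg
  rw [mul_assoc]
  refine (h.Hnorm_mul_le hf hf_supp hw1' hw2').trans ?_
  gcongr
  exact one_le_two

end IsAngularMultiplier

end AngularMultiplier

section SingularWeight

variable {α B p q p' q' s t x R β : ℝ}

lemma sin_pos_and_cos_pos (hβ : β ∈ Ioo 0 (π / 2)) : 0 < sin β ∧ 0 < cos β :=
  ⟨sin_pos_of_pos_of_lt_pi hβ.1 (hβ.2.trans (half_lt_self pi_pos)),
    cos_pos_of_mem_Ioo ⟨by linarith [hβ.1, pi_pos], hβ.2⟩⟩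

/-- The weights `(1+R)⁴R⁻⁴ (sin β)^{-p}(cos β)^{-q}`, which up to constant factors comprise all of
`φ₁`, `φ₂`, `ψ₁`, `ψ₂`. -/
def singularWeight (p q R β : ℝ) : ℝ := (1 + R) ^ 4 / R ^ 4 * sin β ^ (-p) * cos β ^ (-q)

lemma singularWeight_nonneg (p q : ℝ) (hRβ : (R, β) ∈ Qdom) : 0 ≤ singularWeight p q R β := by
  obtain ⟨hsin, hcos⟩ := sin_pos_and_cos_pos hRβ.2
  rw [singularWeight]
  positivity

lemma continuousOn_singularWeight (p q : ℝ) :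
    ContinuousOn (Function.uncurry (singularWeight p q)) Qdom := by
  rintro ⟨R, β⟩ hRβ
  obtain ⟨hsin, hcos⟩ := sin_pos_and_cos_pos hRβ.2
  have hR : R ^ 4 ≠ 0 := pow_ne_zero 4 (ne_of_gt hRβ.1)
  have hradial : ContinuousWithinAt (fun x : ℝ × ℝ => (1 + x.1) ^ 4 / x.1 ^ 4) Qdom (R, β) := by
    fun_prop (disch := exact hR)
  have hsin_cont : ContinuousWithinAt (fun x : ℝ × ℝ => sin x.2) Qdom (R, β) := by fun_prop
  have hcos_cont : ContinuousWithinAt (fun x : ℝ × ℝ => cos x.2) Qdom (R, β) := by fun_prop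
  exact (hradial.mul (hsin_cont.rpow_const (.inl hsin.ne'))).mul
    (hcos_cont.rpow_const (.inl hcos.ne'))

lemma sin_rpow_mul_cos_rpow_mul_singularWeight_le (hs : p - s ≤ p') (ht : q - t ≤ q')
    (hRβ : (R, β) ∈ Qdom) :
    sin β ^ s * cos β ^ t * singularWeight p q R β ≤ singularWeight p' q' R β := by
  obtain ⟨hsin, hcos⟩ := sin_pos_and_cos_pos hRβ.2
  have hsin_le : sin β ^ s * sin β ^ (-p) ≤ sin β ^ (-p') := by
    rw [← rpow_add hsin]
    exact rpow_le_rpow_of_exponent_ge hsin (sin_le_one β) (by linarith)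
  have hcos_le : cos β ^ t * cos β ^ (-q) ≤ cos β ^ (-q') := by
    rw [← rpow_add hcos]
    exact rpow_le_rpow_of_exponent_ge hcos (cos_le_one β) (by linarith)
  calc sin β ^ s * cos β ^ t * singularWeight p q R β
      = (1 + R) ^ 4 / R ^ 4 * (sin β ^ s * sin β ^ (-p)) * (cos β ^ t * cos β ^ (-q)) := by
        rw [singularWeight]
        ring
    _ ≤ singularWeight p' q' R β := by
        rw [singularWeight]
        gcongr

lemma mul_sin_two_mul_rpow_eq_singularWeight (p : ℝ) (hRβ : (R, β) ∈ Qdom) :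
    (1 + R) ^ 4 / R ^ 4 * sin (2 * β) ^ (-p) = 2 ^ (-p) * singularWeight p p R β := by
  obtain ⟨hsin, hcos⟩ := sin_pos_and_cos_pos hRβ.2
  rw [sin_two_mul, mul_rpow (by positivity) hcos.le, mul_rpow zero_le_two hsin.le, singularWeight]
  ring

lemma phi1_eq_singularWeight (hRβ : (R, β) ∈ Qdom) :
    phi1 R β = 2 ^ (-(99 / 100 : ℝ)) * singularWeight (99 / 100) (99 / 100) R β :=
  mul_sin_two_mul_rpow_eq_singularWeight _ hRβ

lemma phi2_eq_singularWeight (hRβ : (R, β) ∈ Qdom) :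
    phi2 α R β = 2 ^ (-(1 + α / 10)) * singularWeight (1 + α / 10) (1 + α / 10) R β :=
  mul_sin_two_mul_rpow_eq_singularWeight _ hRβ

lemma psi1_eq_singularWeight (hRβ : (R, β) ∈ Qdom) :
    psi1 R β = singularWeight (99 / 100) (99 / 100) R β := by
  obtain ⟨hsin, hcos⟩ := sin_pos_and_cos_pos hRβ.2
  rw [psi1, mul_rpow hsin.le hcos.le, singularWeight, mul_assoc]

lemma psi2_eq_singularWeight (α : ℝ) : psi2 α = singularWeight (99 / 100) (1 + α / 10) := rfl

lemma continuousOn_phi1 : ContinuousOn (Function.uncurry phi1) Qdom :=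
  (continuousOn_const.mul (continuousOn_singularWeight _ _)).congr
    fun _ hRβ => phi1_eq_singularWeight hRβ

lemma continuousOn_phi2 (α : ℝ) : ContinuousOn (Function.uncurry (phi2 α)) Qdom :=
  (continuousOn_const.mul (continuousOn_singularWeight _ _)).congr
    fun _ hRβ => phi2_eq_singularWeight hRβ

lemma continuousOn_psi1 : ContinuousOn (Function.uncurry psi1) Qdom :=
  (continuousOn_singularWeight _ _).congr fun _ hRβ => psi1_eq_singularWeight hRβ

lemma continuousOn_psi2 (α : ℝ) : ContinuousOn (Function.uncurry (psi2 α)) Qdom :=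
  continuousOn_singularWeight _ _

lemma le_thirtytwo_mul_two_rpow_neg_mul {x : ℝ} (hp : p ≤ 5) (hx : 0 ≤ x) :
    x ≤ 32 * (2 ^ (-p) * x) := by
  have htwo : (2 : ℝ) ^ (-5 : ℝ) ≤ 2 ^ (-p) := rpow_le_rpow_of_exponent_le one_le_two (by linarith)
  rw [rpow_neg zero_le_two, ← Nat.cast_ofNat (n := 5), rpow_natCast] at htwo
  nlinarith

lemma psi1_le_phi1 (hRβ : (R, β) ∈ Qdom) : psi1 R β ≤ 32 * phi1 R β := by
  rw [phi1_eq_singularWeight hRβ, psi1_eq_singularWeight hRβ]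
  exact le_thirtytwo_mul_two_rpow_neg_mul (by norm_num) (singularWeight_nonneg _ _ hRβ)

lemma psi2_le_phi2 (hσγ : 99 / 100 ≤ 1 + α / 10) (hγ : 1 + α / 10 ≤ 5) (hRβ : (R, β) ∈ Qdom) :
    psi2 α R β ≤ 32 * phi2 α R β := by
  have hle := sin_rpow_mul_cos_rpow_mul_singularWeight_le (p := 99 / 100) (q := 1 + α / 10)
    (p' := 1 + α / 10) (q' := 1 + α / 10) (s := 0) (t := 0) (by simpa using hσγ) (by simp) hRβ
  rw [rpow_zero, rpow_zero, one_mul, one_mul] at hle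
  rw [phi2_eq_singularWeight hRβ, psi2_eq_singularWeight]
  exact hle.trans (le_thirtytwo_mul_two_rpow_neg_mul hγ (singularWeight_nonneg _ _ hRβ))

lemma phi1_le_psi1 (hRβ : (R, β) ∈ Qdom) : phi1 R β ≤ psi1 R β := by
  rw [phi1_eq_singularWeight hRβ, psi1_eq_singularWeight hRβ]
  exact mul_le_of_le_one_left (singularWeight_nonneg _ _ hRβ)
    (rpow_le_one_of_one_le_of_nonpos one_le_two (by norm_num))

lemma phi1_nonneg (hRβ : (R, β) ∈ Qdom) : 0 ≤ phi1 R β := by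
  rw [phi1_eq_singularWeight hRβ]
  exact mul_nonneg (by positivity) (singularWeight_nonneg _ _ hRβ)

lemma phi2_nonneg (α : ℝ) (hRβ : (R, β) ∈ Qdom) : 0 ≤ phi2 α R β := by
  rw [phi2_eq_singularWeight hRβ]
  exact mul_nonneg (by positivity) (singularWeight_nonneg _ _ hRβ)

lemma sin_rpow_sq_mul_phi2_le_psi2 (hγ : 0 ≤ 1 + α / 10) (hs : (1 + α / 10 - 99 / 100) / 2 ≤ s)
    (hRβ : (R, β) ∈ Qdom) : (sin β ^ s) ^ 2 * phi2 α R β ≤ psi2 α R β := by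
  obtain ⟨hsin, -⟩ := sin_pos_and_cos_pos hRβ.2
  have hle := sin_rpow_mul_cos_rpow_mul_singularWeight_le (p := 1 + α / 10) (q := 1 + α / 10)
    (p' := 99 / 100) (q' := 1 + α / 10) (s := s * 2) (t := 0) (by linarith) (by simp) hRβ
  rw [rpow_zero, mul_one, rpow_mul hsin.le, rpow_two] at hle
  rw [phi2_eq_singularWeight hRβ, psi2_eq_singularWeight, mul_left_comm]
  exact (mul_le_of_le_one_left (mul_nonneg (sq_nonneg _) (singularWeight_nonneg _ _ hRβ))
    (rpow_le_one_of_one_le_of_nonpos one_le_two (by linarith))).trans hle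

lemma cos_sq_sq_mul_psi2_le_psi1 (hγ : 1 + α / 10 ≤ 99 / 100 + 4) (hRβ : (R, β) ∈ Qdom) :
    (cos β ^ 2) ^ 2 * psi2 α R β ≤ psi1 R β := by
  have hle := sin_rpow_mul_cos_rpow_mul_singularWeight_le (p := 99 / 100) (q := 1 + α / 10)
    (p' := 99 / 100) (q' := 99 / 100) (s := 0) (t := (4 : ℕ)) (by simp)
    (by push_cast; linarith) hRβ
  rw [rpow_zero, one_mul, rpow_natCast] at hle
  rwa [psi1_eq_singularWeight hRβ, psi2_eq_singularWeight, ← pow_mul]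

lemma sq_mul_phi1_le_sq_mul_psi1 (hx : |x| ≤ B) (hRβ : (R, β) ∈ Qdom) :
    x ^ 2 * phi1 R β ≤ B ^ 2 * psi1 R β :=
  mul_le_mul (sq_le_sq' (abs_le.1 hx).1 (abs_le.1 hx).2) (phi1_le_psi1 hRβ) (phi1_nonneg hRβ)
    (sq_nonneg B)

lemma sq_mul_phi2_le_sq_mul_psi2 (hγ : 0 ≤ 1 + α / 10) (hs : (1 + α / 10 - 99 / 100) / 2 ≤ s)
    (hRβ : (R, β) ∈ Qdom) (hx : |x| ≤ B * sin β ^ s) :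
    x ^ 2 * phi2 α R β ≤ B ^ 2 * psi2 α R β :=
  calc x ^ 2 * phi2 α R β ≤ (B * sin β ^ s) ^ 2 * phi2 α R β :=
        mul_le_mul_of_nonneg_right (sq_le_sq' (abs_le.1 hx).1 (abs_le.1 hx).2) (phi2_nonneg α hRβ)
    _ = B ^ 2 * ((sin β ^ s) ^ 2 * phi2 α R β) := by ring
    _ ≤ B ^ 2 * psi2 α R β :=
        mul_le_mul_of_nonneg_left (sin_rpow_sq_mul_phi2_le_psi2 hγ hs hRβ) (sq_nonneg B)

lemma sq_mul_phi2_le_sq_mul_psi1 (hγ : 0 ≤ 1 + α / 10) (hγ' : 1 + α / 10 ≤ 99 / 100 + 4)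
    (hs : (1 + α / 10 - 99 / 100) / 2 ≤ s) (hRβ : (R, β) ∈ Qdom)
    (hx : |x| ≤ B * (sin β ^ s * cos β ^ 2)) :
    x ^ 2 * phi2 α R β ≤ B ^ 2 * psi1 R β :=
  calc x ^ 2 * phi2 α R β ≤ (B * cos β ^ 2) ^ 2 * psi2 α R β :=
        sq_mul_phi2_le_sq_mul_psi2 hγ hs hRβ (hx.trans_eq (by ring))
    _ = B ^ 2 * ((cos β ^ 2) ^ 2 * psi2 α R β) := by ring
    _ ≤ B ^ 2 * psi1 R β :=
        mul_le_mul_of_nonneg_left (cos_sq_sq_mul_psi2_le_psi1 hγ' hRβ) (sq_nonneg B)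

end SingularWeight

section SinPow

variable {α B lam β : ℝ} {m n k : ℕ}

/-- The functions `r_n(λ, β)` with `D_β^{n+1} (sin^λ β) = sin^λ β · cos² β · r_n(λ, β)`, on which
`D_β` acts for fixed `λ`. The recursion comes from `D_β sin^λ = 2λ cos² β · sin^λ` and
`D_β cos² = -4 sin² β · cos² β`. -/
def sinPowCofactor : ℕ → ℝ → ℝ → ℝ
  | 0 => fun lam _ => 2 * lam
  | n + 1 => fun lam β => Dbeta (sinPowCofactor n) lam β +
      (2 * lam * cos β ^ 2 - 4 * sin β ^ 2) * sinPowCofactor n lam β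

lemma contDiff_sinPowCofactor (n : ℕ) : ContDiff ℝ ⊤ (Function.uncurry (sinPowCofactor n)) := by
  induction n with
  | zero => exact contDiff_const.mul contDiff_fst
  | succ n ih =>
    have hcoeff : ContDiff ℝ ⊤ fun p : ℝ × ℝ => 2 * p.1 * cos p.2 ^ 2 - 4 * sin p.2 ^ 2 := by
      fun_prop
    exact (contDiff_Dbeta ih).add (hcoeff.mul ih)

lemma iterate_angularDeriv_sin_rpow (lam : ℝ) (n : ℕ) (hβ : β ∈ Ioo 0 (π / 2)) :
    angularDeriv^[n + 1] (fun b => sin b ^ lam) β =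
      sin β ^ lam * (cos β ^ 2 * sinPowCofactor n lam β) := by
  induction n generalizing β with
  | zero =>
    obtain ⟨hsin, -⟩ := sin_pos_and_cos_pos hβ
    have hderiv := (hasDerivAt_sin β).rpow_const (p := lam) (.inl hsin.ne')
    rw [zero_add, Function.iterate_one, angularDeriv, fieldDeriv, hderiv.deriv, sin_two_mul,
      rpow_sub_one hsin.ne', sinPowCofactor]
    field_simp
  | succ n ih =>
    obtain ⟨hsin, -⟩ := sin_pos_and_cos_pos hβ
    have hcofactor : HasDerivAt (sinPowCofactor n lam) (deriv (sinPowCofactor n lam) β) β :=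
      (((contDiff_sinPowCofactor n).comp (contDiff_prodMk_right lam)).differentiable
        (by simp) β).hasDerivAt
    have hderiv := ((hasDerivAt_sin β).rpow_const (p := lam) (.inl hsin.ne')).fun_mul
      (((hasDerivAt_cos β).fun_pow 2).fun_mul hcofactor)
    rw [Function.iterate_succ_apply']
    refine (fieldDeriv_congr isOpen_Ioo (fun b hb => ih hb) hβ).trans ?_
    rw [fieldDeriv, hderiv.deriv, rpow_sub_one hsin.ne', sin_two_mul]
    simp only [sinPowCofactor, Dbeta, sin_two_mul]
    field_simp
    ring

lemma exists_abs_iterate_angularDeriv_sin_rpow_le {S : Set ℝ} (hS : IsCompact S) (m : ℕ) :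
    ∃ B, ∀ lam ∈ S, ∀ k, 1 ≤ k → k ≤ m → ∀ β ∈ Ioo 0 (π / 2),
      |angularDeriv^[k] (fun b => sin b ^ lam) β| ≤ B * (sin β ^ lam * cos β ^ 2) := by
  choose b hb using fun n =>
    (hS.prod (isCompact_Icc (a := 0) (b := π / 2))).exists_bound_of_continuousOn
      (contDiff_sinPowCofactor n).continuous.continuousOn
  obtain ⟨B, hB⟩ := ((Finset.range m).image b).bddAbove
  refine ⟨B, fun lam hlam k hk hkm β hβ => ?_⟩
  obtain ⟨n, rfl⟩ := Nat.exists_eq_add_of_le' hk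
  obtain ⟨hsin, hcos⟩ := sin_pos_and_cos_pos hβ
  have hcofactor : |sinPowCofactor n lam β| ≤ B :=
    (hb n (lam, β) ⟨hlam, Ioo_subset_Icc_self hβ⟩).trans
      (hB (Finset.mem_image_of_mem b (Finset.mem_range.2 hkm)))
  rw [iterate_angularDeriv_sin_rpow lam n hβ, ← mul_assoc, abs_mul,
    abs_of_pos (by positivity), mul_comm]
  gcongr

end SinPow

section Comparison

variable {α B lam : ℝ} {m : ℕ}

lemma isAngularMultiplier_one (m : ℕ) (hσγ : 99 / 100 ≤ 1 + α / 10) (hγ : 1 + α / 10 ≤ 5) :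
    IsAngularMultiplier m psi1 (psi2 α) phi1 (phi2 α) 6 fun _ => 1 := by
  refine ⟨by norm_num, contDiffOn_const, fun R β hRβ => ?_, fun k _ R β hRβ => ?_,
    fun k hk _ R β hRβ => ?_⟩
  · linarith [psi1_le_phi1 hRβ, phi1_nonneg hRβ]
  · have hphi2 := phi2_nonneg α hRβ
    rcases k with _ | k
    · rw [Function.iterate_zero_apply]
      linarith [psi2_le_phi2 hσγ hγ hRβ]
    · rw [angularDeriv, iterate_succ_fieldDeriv_const]
      simp [hphi2]
  · obtain ⟨k, rfl⟩ := Nat.exists_eq_add_of_le' hk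
    rw [angularDeriv, iterate_succ_fieldDeriv_const]
    simp [phi1_nonneg hRβ]

lemma isAngularMultiplier_sin_rpow (hB : 1 ≤ B) (hσγ : 99 / 100 ≤ 1 + α / 10)
    (hγ : 1 + α / 10 ≤ 99 / 100 + 4) (hlam : (1 + α / 10 - 99 / 100) / 2 ≤ lam)
    (hbound : ∀ k, 1 ≤ k → k ≤ m → ∀ β ∈ Ioo 0 (π / 2),
      |angularDeriv^[k] (fun b => sin b ^ lam) β| ≤ B * (sin β ^ lam * cos β ^ 2)) :
    IsAngularMultiplier m phi1 (phi2 α) psi1 (psi2 α) B fun β => sin β ^ lam := by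
  have hγ_nonneg : 0 ≤ 1 + α / 10 := by linarith
  refine ⟨by linarith, fun β hβ => ?_, fun R β hRβ => ?_, fun k hkm R β hRβ => ?_,
    fun k hk hkm R β hRβ => ?_⟩
  · exact (contDiff_sin.contDiffAt.rpow_const_of_ne
      (sin_pos_and_cos_pos hβ).1.ne').contDiffWithinAt
  · obtain ⟨hsin, -⟩ := sin_pos_and_cos_pos hRβ.2
    refine sq_mul_phi1_le_sq_mul_psi1 ?_ hRβ
    rw [abs_of_nonneg (by positivity)]
    exact (rpow_le_one hsin.le (sin_le_one β) (by linarith)).trans hB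
  · obtain ⟨hsin, -⟩ := sin_pos_and_cos_pos hRβ.2
    refine sq_mul_phi2_le_sq_mul_psi2 hγ_nonneg hlam hRβ ?_
    rcases k.eq_zero_or_pos with rfl | hk
    · rw [Function.iterate_zero_apply, abs_of_nonneg (by positivity)]
      exact le_mul_of_one_le_left (by positivity) hB
    · refine (hbound k hk hkm β hRβ.2).trans ?_
      gcongr
      exact mul_le_of_le_one_right (by positivity) (cos_sq_le_one β)
  · exact sq_mul_phi2_le_sq_mul_psi1 hγ_nonneg hγ hlam hRβ (hbound k hk hkm β hRβ.2)

lemma exists_isAngularMultiplier_sin_rpow (M : ℕ) (Λ : ℝ) :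
    ∃ B, ∀ α : ℝ, 99 / 100 ≤ 1 + α / 10 → 1 + α / 10 ≤ 99 / 100 + 4 → ∀ m ≤ M,
      ∀ lam, (1 + α / 10 - 99 / 100) / 2 ≤ lam → lam ≤ Λ →
        IsAngularMultiplier m phi1 (phi2 α) psi1 (psi2 α) B fun β => sin β ^ lam := by
  obtain ⟨B, hB⟩ := exists_abs_iterate_angularDeriv_sin_rpow_le (isCompact_Icc (a := 0) (b := Λ)) M
  refine ⟨max 1 B, fun α hσγ hγ m hm lam hlam hlamΛ =>
    isAngularMultiplier_sin_rpow (le_max_left 1 B) hσγ hγ hlam fun k hk hkm β hβ => ?_⟩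
  obtain ⟨hsin, hcos⟩ := sin_pos_and_cos_pos hβ
  refine (hB lam ⟨by linarith, hlamΛ⟩ k hk (hkm.trans hm) β hβ).trans ?_
  gcongr
  exact le_max_right 1 B

end Comparison

theorem Hm_psi_phi_comparison_general (M : ℕ) (Λ : ℝ) :
    ∃ C : ℝ, ∀ α : ℝ, 99 / 100 ≤ 1 + α / 10 → 1 + α / 10 ≤ 99 / 100 + 4 →
      ∀ m : ℕ, m ≤ M →
      ∀ lam : ℝ, ((1 + α / 10) - 99 / 100) / 2 ≤ lam → lam ≤ Λ →
      ∀ f : ℝ → ℝ → ℝ, ContDiff ℝ m (Function.uncurry f) → suppIn f →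
        Hnorm m psi1 (psi2 α) f ≤ C * Hnorm m phi1 (phi2 α) f ∧
        Hnorm m phi1 (phi2 α) (fun R β => sin β ^ lam * f R β)
          ≤ C * Hnorm m psi1 (psi2 α) f := by
  obtain ⟨B, hB⟩ := exists_isAngularMultiplier_sin_rpow M Λ
  refine ⟨((M + 1) + (M + 1) ^ 2 * 2 ^ M) * max 6 B,
    fun α hσγ hγ m hm lam hlam hlamΛ f hf hf_supp => ⟨?_, ?_⟩⟩
  · simpa using (isAngularMultiplier_one m hσγ (by linarith)).Hnorm_mul_le_of_le hf hf_supp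
      continuousOn_phi1 (continuousOn_phi2 α) hm (le_max_left 6 B)
  · exact (hB α hσγ hγ m hm lam hlam hlamΛ).Hnorm_mul_le_of_le hf hf_supp
      continuousOn_psi1 (continuousOn_psi2 α) hm (le_max_right 6 B)

/-- comparison between the `H^m(ψ)` and `H^m` norms. -/
theorem Hm_psi_phi_comparison :
    ∃ C : ℝ, ∀ α : ℝ, 0 < α → α ≤ 1/1000 →
      ∀ m : ℕ, m ≤ 3 →
      ∀ lam : ℝ, ((1 + α/10) - 99/100)/2 ≤ lam → lam ≤ 1/2 →
      ∀ f : ℝ → ℝ → ℝ, ContDiff ℝ m (Function.uncurry f) → suppIn f →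
        Hnorm m psi1 (psi2 α) f ≤ C * Hnorm m phi1 (phi2 α) f ∧
        Hnorm m phi1 (phi2 α) (fun R β => Real.sin β ^ lam * f R β)
          ≤ C * Hnorm m psi1 (psi2 α) f :=
  (Hm_psi_phi_comparison_general 3 (1 / 2)).imp fun _ hC α hα hα' =>
    hC α (by linarith) (by linarith)

end Paper
end
end

section
/- For every α ∈ (0, 1/10] there is a constant C_α such that the following holds. Let f : (0,∞)×[0,π/2] → ℝ be continuously differentiable with f(R, π/2) = 0 for all R > 0 and ‖f‖_{C¹} < ∞, and define F on the open first quadrant of ℝ² by F(x,y) = f((x²+y²)^{α/2}, arctan(y/x)). Then for all points P₁, P₂ in the open first quadrant: |F(P₁) − F(P₂)| ≤ C_α ‖f‖_{C¹} |P₁ − P₂|^{α/40}; i.e. the weighted C¹ space embeds continuously into the Hölder space C^{α/40}. -/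
open Real MeasureTheory Set

noncomputable section

namespace Paper

/-!
The exponent is `κ = αγ` with `γ = 1/40`. Along a ray, with `R = r ^ α`, the bound on `D_R f` gives
`|∂_r f| ≲ r ^ (κ - 1)`, since `R ^ (1 - γ) ≤ 1 + R`. Along a circle, the bound on `D_β f` gives
`|∂_β f| ≲ r ^ κ * sin (2β) ^ (κ - 1)`. Both singularities are integrable, with primitives built
from `t ^ κ`, which is `κ`-Hölder. Moving from one point to the other along the smaller circle and
then along a ray costs a length comparable to their distance.
-/

lemma norm_sub_le_abs_sub_of_norm_deriv_le {E : Type*} [NormedAddCommGroup E] [NormedSpace ℝ E]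
    {s : Set ℝ} [s.OrdConnected] {g g' : ℝ → E} {G G' : ℝ → ℝ}
    (hg : ∀ t ∈ s, HasDerivAt g (g' t) t) (hG : ∀ t ∈ s, HasDerivAt G (G' t) t)
    (hle : ∀ t ∈ s, ‖g' t‖ ≤ G' t) {a b : ℝ} (ha : a ∈ s) (hb : b ∈ s) :
    ‖g a - g b‖ ≤ |G a - G b| := by
  wlog hab : a ≤ b generalizing a b
  · rw [norm_sub_rev, abs_sub_comm]
    exact this hb ha (le_of_not_ge hab)
  have hs : Icc a b ⊆ s := Set.Icc_subset s ha hb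
  have hs' : Ico a b ⊆ s := Ico_subset_Icc_self.trans hs
  have hgd (t : ℝ) (ht : t ∈ s) : HasDerivAt (fun t => g t - g a) (g' t) t := (hg t ht).sub_const _
  have hGd (t : ℝ) (ht : t ∈ s) : HasDerivAt (fun t => G t - G a) (G' t) t := (hG t ht).sub_const _
  rw [norm_sub_rev, abs_sub_comm]
  refine le_trans ?_ (le_abs_self _)
  exact image_norm_le_of_norm_deriv_right_le_deriv_boundary'
    (fun t ht => (hgd t (hs ht)).continuousAt.continuousWithinAt)
    (fun t ht => (hgd t (hs' ht)).hasDerivWithinAt) (by simp)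
    (fun t ht => (hGd t (hs ht)).continuousAt.continuousWithinAt)
    (fun t ht => (hGd t (hs' ht)).hasDerivWithinAt)
    (fun t ht => hle t (hs' ht)) (right_mem_Icc.2 hab)

lemma abs_rpow_sub_rpow_le {κ a b : ℝ} (hκ : 0 ≤ κ) (hκ1 : κ ≤ 1) (ha : 0 ≤ a) (hb : 0 ≤ b) :
    |a ^ κ - b ^ κ| ≤ |a - b| ^ κ := by
  wlog hab : b ≤ a generalizing a b
  · rw [abs_sub_comm, abs_sub_comm a]
    exact this hb ha (le_of_not_ge hab)
  rw [abs_of_nonneg (sub_nonneg.2 (Real.rpow_le_rpow hb hab hκ)), abs_of_nonneg (sub_nonneg.2 hab),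
    sub_le_iff_le_add]
  simpa only [sub_add_cancel] using Real.rpow_add_le_add_rpow (sub_nonneg.2 hab) hb hκ hκ1

section HolderOfDerivBound

variable {E : Type*} [NormedAddCommGroup E] [NormedSpace ℝ E] {g g' : ℝ → E} {κ K l u a b : ℝ}

lemma norm_sub_le_of_norm_deriv_le_rpow (hκ : 0 < κ) (hκ1 : κ ≤ 1)
    (hg : ∀ t ∈ Ioi l, HasDerivAt g (g' t) t)
    (hle : ∀ t ∈ Ioi l, ‖g' t‖ ≤ K * (t - l) ^ (κ - 1)) (ha : a ∈ Ioi l) (hb : b ∈ Ioi l) :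
    ‖g a - g b‖ ≤ K / κ * |a - b| ^ κ := by
  have ha0 : 0 < a - l := sub_pos.2 ha
  have hb0 : 0 < b - l := sub_pos.2 hb
  have hK : 0 ≤ K :=
    nonneg_of_mul_nonneg_left ((norm_nonneg _).trans (hle a ha)) (Real.rpow_pos_of_pos ha0 _)
  have hprim : ∀ t ∈ Ioi l,
      HasDerivAt (fun t => K / κ * (t - l) ^ κ) (K * (t - l) ^ (κ - 1)) t := by
    intro t ht
    have h := ((hasDerivAt_id t).sub_const l).rpow_const (p := κ) (Or.inl (sub_pos.2 ht).ne')
    refine (h.const_mul (K / κ)).congr_deriv ?_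
    simp only [id]
    field_simp
  calc ‖g a - g b‖ ≤ |K / κ * (a - l) ^ κ - K / κ * (b - l) ^ κ| :=
        norm_sub_le_abs_sub_of_norm_deriv_le hg hprim hle ha hb
    _ = K / κ * |(a - l) ^ κ - (b - l) ^ κ| := by
        rw [← mul_sub, abs_mul, abs_of_nonneg (by positivity : 0 ≤ K / κ)]
    _ ≤ K / κ * |a - b| ^ κ := by
        gcongr
        simpa only [sub_sub_sub_cancel_right] using abs_rpow_sub_rpow_le hκ.le hκ1 ha0.le hb0.le

lemma norm_sub_le_of_norm_deriv_le_rpow_add_rpow (hκ : 0 < κ) (hκ1 : κ ≤ 1)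
    (hg : ∀ t ∈ Ioo l u, HasDerivAt g (g' t) t)
    (hle : ∀ t ∈ Ioo l u, ‖g' t‖ ≤ K * ((t - l) ^ (κ - 1) + (u - t) ^ (κ - 1)))
    (ha : a ∈ Ioo l u) (hb : b ∈ Ioo l u) :
    ‖g a - g b‖ ≤ 2 * K / κ * |a - b| ^ κ := by
  have hal : 0 < a - l := sub_pos.2 ha.1
  have hau : 0 < u - a := sub_pos.2 ha.2
  have hbl : 0 < b - l := sub_pos.2 hb.1
  have hbu : 0 < u - b := sub_pos.2 hb.2
  have hK : 0 ≤ K := nonneg_of_mul_nonneg_left ((norm_nonneg _).trans (hle a ha)) (by positivity)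
  have hprim : ∀ t ∈ Ioo l u, HasDerivAt (fun t => K / κ * ((t - l) ^ κ - (u - t) ^ κ))
      (K * ((t - l) ^ (κ - 1) + (u - t) ^ (κ - 1))) t := by
    intro t ht
    have hl := ((hasDerivAt_id t).sub_const l).rpow_const (p := κ) (Or.inl (sub_pos.2 ht.1).ne')
    have hu := ((hasDerivAt_id t).const_sub u).rpow_const (p := κ) (Or.inl (sub_pos.2 ht.2).ne')
    refine ((hl.sub hu).const_mul (K / κ)).congr_deriv ?_
    simp only [id]
    field_simp
    ring
  have hl : |(a - l) ^ κ - (b - l) ^ κ| ≤ |a - b| ^ κ := by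
    simpa only [sub_sub_sub_cancel_right] using abs_rpow_sub_rpow_le hκ.le hκ1 hal.le hbl.le
  have hu : |(u - b) ^ κ - (u - a) ^ κ| ≤ |a - b| ^ κ := by
    simpa only [sub_sub_sub_cancel_left] using abs_rpow_sub_rpow_le hκ.le hκ1 hbu.le hau.le
  calc ‖g a - g b‖
      ≤ |K / κ * ((a - l) ^ κ - (u - a) ^ κ) - K / κ * ((b - l) ^ κ - (u - b) ^ κ)| :=
        norm_sub_le_abs_sub_of_norm_deriv_le hg hprim hle ha hb
    _ = K / κ * |((a - l) ^ κ - (b - l) ^ κ) + ((u - b) ^ κ - (u - a) ^ κ)| := by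
        rw [← mul_sub, abs_mul, abs_of_nonneg (by positivity : 0 ≤ K / κ)]
        congr 2
        ring
    _ ≤ K / κ * (|a - b| ^ κ + |a - b| ^ κ) := by
        gcongr
        exact (abs_add_le _ _).trans (add_le_add hl hu)
    _ = 2 * K / κ * |a - b| ^ κ := by ring

end HolderOfDerivBound

lemma le_sin_two_mul {t : ℝ} (ht : 0 ≤ t) (ht' : t ≤ π / 4) : t ≤ sin (2 * t) :=
  calc t ≤ 2 / π * (2 * t) := by
        rw [div_mul_eq_mul_div, le_div_iff₀ pi_pos]
        nlinarith [pi_le_four]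
    _ ≤ sin (2 * t) := Real.mul_le_sin (by linarith) (by linarith)

lemma min_le_sin_two_mul {β : ℝ} (hβ : β ∈ Icc 0 (π / 2)) :
    min β (π / 2 - β) ≤ sin (2 * β) := by
  rcases le_total β (π / 4) with h | h
  · exact (min_le_left _ _).trans (le_sin_two_mul hβ.1 h)
  · have := le_sin_two_mul (t := π / 2 - β) (by linarith [hβ.2]) (by linarith)
    rw [show 2 * (π / 2 - β) = π - 2 * β by ring, sin_pi_sub] at this
    exact (min_le_right _ _).trans this

lemma sin_two_mul_rpow_le {p β : ℝ} (hp : p ≤ 0) (hβ : β ∈ Ioo 0 (π / 2)) :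
    sin (2 * β) ^ p ≤ β ^ p + (π / 2 - β) ^ p := by
  have hβl : 0 < β := hβ.1
  have hβr : 0 < π / 2 - β := sub_pos.2 hβ.2
  refine (Real.rpow_le_rpow_of_nonpos (lt_min hβl hβr)
    (min_le_sin_two_mul (Ioo_subset_Icc_self hβ)) hp).trans ?_
  rcases min_choice β (π / 2 - β) with h | h <;> rw [h]
  · exact le_add_of_nonneg_right (by positivity)
  · exact le_add_of_nonneg_left (by positivity)

lemma rpow_one_sub_le_one_add {γ R : ℝ} (hγ : 0 ≤ γ) (hγ1 : γ ≤ 1) (hR : 0 ≤ R) :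
    R ^ (1 - γ) ≤ 1 + R :=
  calc R ^ (1 - γ) ≤ (1 + R) ^ (1 - γ) :=
        Real.rpow_le_rpow hR (by linarith) (sub_nonneg.2 hγ1)
    _ ≤ 1 + R := Real.rpow_le_self_of_one_le (by linarith) (by linarith)

section PolarCoordinates

variable {x y r₁ r₂ β₁ β₂ : ℝ}

lemma sqrt_eq_mul_sqrt_one_add_div_sq (hx : 0 < x) (y : ℝ) :
    √(x ^ 2 + y ^ 2) = x * √(1 + (y / x) ^ 2) := by
  rw [show x ^ 2 + y ^ 2 = x ^ 2 * (1 + (y / x) ^ 2) by field_simp, Real.sqrt_mul (sq_nonneg x),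
    Real.sqrt_sq hx.le]

lemma sqrt_mul_cos_arctan_div (hx : 0 < x) (y : ℝ) :
    √(x ^ 2 + y ^ 2) * cos (arctan (y / x)) = x := by
  rw [sqrt_eq_mul_sqrt_one_add_div_sq hx, cos_arctan]
  field_simp

lemma sqrt_mul_sin_arctan_div (hx : 0 < x) (y : ℝ) :
    √(x ^ 2 + y ^ 2) * sin (arctan (y / x)) = y := by
  rw [sqrt_eq_mul_sqrt_one_add_div_sq hx, sin_arctan]
  field_simp

lemma polar_dist_sq (r₁ r₂ β₁ β₂ : ℝ) :
    (r₁ * cos β₁ - r₂ * cos β₂) ^ 2 + (r₁ * sin β₁ - r₂ * sin β₂) ^ 2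
      = (r₁ - r₂) ^ 2 + 2 * (r₁ * r₂) * (1 - cos (β₁ - β₂)) := by
  rw [cos_sub]
  linear_combination r₁ ^ 2 * sin_sq_add_cos_sq β₁ + r₂ ^ 2 * sin_sq_add_cos_sq β₂

lemma abs_radius_sub_le_polar_dist (hr₁ : 0 ≤ r₁) (hr₂ : 0 ≤ r₂) :
    |r₁ - r₂| ≤ √((r₁ * cos β₁ - r₂ * cos β₂) ^ 2 + (r₁ * sin β₁ - r₂ * sin β₂) ^ 2) := by
  apply Real.abs_le_sqrt
  rw [polar_dist_sq]
  have hcos : 0 ≤ 1 - cos (β₁ - β₂) := sub_nonneg.2 (cos_le_one _)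
  exact le_add_of_nonneg_right (by positivity)

lemma radius_mul_abs_angle_sub_le_polar_dist (hr₁ : 0 ≤ r₁) (hr : r₁ ≤ r₂)
    (hβ : |β₁ - β₂| ≤ π) :
    r₁ * |β₁ - β₂| ≤
      π / 2 * √((r₁ * cos β₁ - r₂ * cos β₂) ^ 2 + (r₁ * sin β₁ - r₂ * sin β₂) ^ 2) := by
  suffices h : 2 / π * (r₁ * |β₁ - β₂|) ≤
      √((r₁ * cos β₁ - r₂ * cos β₂) ^ 2 + (r₁ * sin β₁ - r₂ * sin β₂) ^ 2) by
    rwa [← inv_div, inv_mul_le_iff₀ (by positivity)] at h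
  apply Real.le_sqrt_of_sq_le
  have hr₂ : 0 ≤ r₂ := hr₁.trans hr
  have hcos : 2 / π ^ 2 * (β₁ - β₂) ^ 2 ≤ 1 - cos (β₁ - β₂) := by
    linarith [Real.cos_le_one_sub_mul_cos_sq hβ]
  calc (2 / π * (r₁ * |β₁ - β₂|)) ^ 2
      = 2 * (r₁ * r₁) * (2 / π ^ 2 * (β₁ - β₂) ^ 2) := by
        rw [mul_pow, mul_pow, sq_abs]
        ring
    _ ≤ 2 * (r₁ * r₂) * (1 - cos (β₁ - β₂)) := by gcongr
    _ ≤ (r₁ - r₂) ^ 2 + 2 * (r₁ * r₂) * (1 - cos (β₁ - β₂)) :=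
        le_add_of_nonneg_left (sq_nonneg _)
    _ = _ := (polar_dist_sq r₁ r₂ β₁ β₂).symm

end PolarCoordinates

/-- `f` is differentiable on `Qdom` and `M` bounds pointwise the two derivative terms of the
weighted `C¹` norm, with an arbitrary exponent `γ` in place of `1/40` in the angular weight. -/
structure HasWeightedGradientBound (α γ M : ℝ) (f : ℝ → ℝ → ℝ) : Prop where
  differentiableOn : DifferentiableOn ℝ (Function.uncurry f) Qdom
  radial_le : ∀ R ∈ Ioi (0 : ℝ), ∀ β ∈ Ioo 0 (π / 2), |(1 + R) / R * DR f R β| ≤ M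
  angular_le : ∀ R ∈ Ioi (0 : ℝ), ∀ β ∈ Ioo 0 (π / 2),
    |(1 + (R * sin (2 * β) ^ α) ^ (-γ)) * Dbeta f R β| ≤ M

namespace HasWeightedGradientBound

variable {α γ M R β r r₁ r₂ β₁ β₂ : ℝ} {f : ℝ → ℝ → ℝ}

lemma differentiableAt (hf : HasWeightedGradientBound α γ M f) (hR : 0 < R)
    (hβ : β ∈ Ioo 0 (π / 2)) : DifferentiableAt ℝ (Function.uncurry f) (R, β) :=
  hf.differentiableOn.differentiableAt
    (prod_mem_nhds (Ioi_mem_nhds hR) (Ioo_mem_nhds hβ.1 hβ.2))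

lemma hasDerivAt_radial (hf : HasWeightedGradientBound α γ M f) (hR : 0 < R)
    (hβ : β ∈ Ioo 0 (π / 2)) :
    HasDerivAt (fun ρ => f ρ β) (deriv (fun ρ => f ρ β) R) R :=
  ((hf.differentiableAt hR hβ).comp (f := fun ρ : ℝ => (ρ, β)) R (by fun_prop)).hasDerivAt

lemma hasDerivAt_angular (hf : HasWeightedGradientBound α γ M f) (hR : 0 < R)
    (hβ : β ∈ Ioo 0 (π / 2)) :
    HasDerivAt (f R) (deriv (f R) β) β :=
  ((hf.differentiableAt hR hβ).comp (f := fun θ : ℝ => (R, θ)) β (by fun_prop)).hasDerivAt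

lemma nonneg (hf : HasWeightedGradientBound α γ M f) : 0 ≤ M :=
  (abs_nonneg _).trans
    (hf.radial_le 1 (mem_Ioi.2 one_pos) (π / 4) ⟨by positivity, by linarith [pi_pos]⟩)

lemma one_add_mul_abs_deriv_radial_le (hf : HasWeightedGradientBound α γ M f) (hR : 0 < R)
    (hβ : β ∈ Ioo 0 (π / 2)) : (1 + R) * |deriv (fun ρ => f ρ β) R| ≤ M := by
  have h := hf.radial_le R hR β hβ
  rwa [DR, ← mul_assoc, div_mul_cancel₀ _ hR.ne', abs_mul, abs_of_pos (by positivity)] at h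

lemma abs_deriv_angular_le (hf : HasWeightedGradientBound α γ M f) (hR : 0 < R)
    (hβ : β ∈ Ioo 0 (π / 2)) :
    |deriv (f R) β| ≤ M * R ^ γ * sin (2 * β) ^ (α * γ - 1) := by
  have hs : 0 < sin (2 * β) := sin_pos_of_pos_of_lt_pi (by linarith [hβ.1]) (by linarith [hβ.2])
  have hw : (R * sin (2 * β) ^ α) ^ (-γ) = (R ^ γ * sin (2 * β) ^ (α * γ))⁻¹ := by
    rw [Real.rpow_neg (by positivity), Real.mul_rpow hR.le (by positivity), ← Real.rpow_mul hs.le]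
  have h : (R ^ γ * sin (2 * β) ^ (α * γ))⁻¹ * (sin (2 * β) * |deriv (f R) β|) ≤ M := by
    refine le_trans ?_ (hf.angular_le R hR β hβ)
    rw [hw, Dbeta, abs_mul, abs_mul, abs_of_pos hs,
      abs_of_pos (by positivity : 0 < 1 + (R ^ γ * sin (2 * β) ^ (α * γ))⁻¹)]
    gcongr
    exact le_add_of_nonneg_left zero_le_one
  rw [inv_mul_le_iff₀ (by positivity)] at h
  rw [Real.rpow_sub_one hs.ne', ← mul_div_assoc, le_div_iff₀ hs]
  linarith

lemma abs_radial_sub_le (hf : HasWeightedGradientBound α γ M f) (hα : 0 < α) (hγ : 0 < γ)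
    (hγ1 : γ ≤ 1) (hαγ : α * γ ≤ 1) (hr₁ : 0 < r₁) (hr₂ : 0 < r₂) (hβ : β ∈ Ioo 0 (π / 2)) :
    |f (r₁ ^ α) β - f (r₂ ^ α) β| ≤ M / γ * |r₁ - r₂| ^ (α * γ) := by
  have hderiv : ∀ r ∈ Ioi (0 : ℝ), HasDerivAt (fun r => f (r ^ α) β)
      (deriv (fun ρ => f ρ β) (r ^ α) * (α * r ^ (α - 1))) r := fun r hr =>
    (hf.hasDerivAt_radial (Real.rpow_pos_of_pos hr α) hβ).comp (h₂ := fun ρ => f ρ β) r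
      (Real.hasDerivAt_rpow_const (Or.inl (ne_of_gt hr)))
  have hbound : ∀ r ∈ Ioi (0 : ℝ), ‖deriv (fun ρ => f ρ β) (r ^ α) * (α * r ^ (α - 1))‖ ≤
      α * M * (r - 0) ^ (α * γ - 1) := by
    intro r (hr : 0 < r)
    have hpow : r ^ (α - 1) = (r ^ α) ^ (1 - γ) * r ^ (α * γ - 1) := by
      rw [← Real.rpow_mul hr.le, ← Real.rpow_add hr]
      ring_nf
    rw [sub_zero, norm_mul, Real.norm_eq_abs, Real.norm_of_nonneg (by positivity)]
    calc |deriv (fun ρ => f ρ β) (r ^ α)| * (α * r ^ (α - 1))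
        = α * ((r ^ α) ^ (1 - γ) * |deriv (fun ρ => f ρ β) (r ^ α)|) * r ^ (α * γ - 1) := by
          rw [hpow]
          ring
      _ ≤ α * ((1 + r ^ α) * |deriv (fun ρ => f ρ β) (r ^ α)|) * r ^ (α * γ - 1) := by
          gcongr
          exact rpow_one_sub_le_one_add hγ.le hγ1 (by positivity)
      _ ≤ α * M * r ^ (α * γ - 1) := by
          gcongr
          exact hf.one_add_mul_abs_deriv_radial_le (by positivity) hβ
  have h := norm_sub_le_of_norm_deriv_le_rpow (by positivity) hαγ hderiv hbound hr₁ hr₂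
  rwa [mul_div_mul_left _ _ hα.ne'] at h

lemma abs_angular_sub_le (hf : HasWeightedGradientBound α γ M f) (hα : 0 < α) (hγ : 0 < γ)
    (hαγ : α * γ ≤ 1) (hr : 0 < r) (hβ₁ : β₁ ∈ Ioo 0 (π / 2)) (hβ₂ : β₂ ∈ Ioo 0 (π / 2)) :
    |f (r ^ α) β₁ - f (r ^ α) β₂| ≤ 2 * M / (α * γ) * (r * |β₁ - β₂|) ^ (α * γ) := by
  have hM : 0 ≤ M := hf.nonneg
  have hR : 0 < r ^ α := by positivity
  have hbound : ∀ β ∈ Ioo 0 (π / 2), ‖deriv (f (r ^ α)) β‖ ≤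
      M * r ^ (α * γ) * ((β - 0) ^ (α * γ - 1) + (π / 2 - β) ^ (α * γ - 1)) := by
    intro β hβ
    refine (hf.abs_deriv_angular_le hR hβ).trans ?_
    rw [← Real.rpow_mul hr.le, sub_zero]
    gcongr
    exact sin_two_mul_rpow_le (by linarith) hβ
  have h := norm_sub_le_of_norm_deriv_le_rpow_add_rpow (by positivity) hαγ
    (fun β hβ => hf.hasDerivAt_angular hR hβ) hbound hβ₁ hβ₂
  rw [Real.mul_rpow hr.le (abs_nonneg _)]
  exact h.trans_eq (by ring)

lemma abs_sub_le_polar_dist (hf : HasWeightedGradientBound α γ M f) (hα : 0 < α) (hγ : 0 < γ)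
    (hγ1 : γ ≤ 1) (hαγ : α * γ ≤ 1) (hr₁ : 0 < r₁) (hr₂ : 0 < r₂)
    (hβ₁ : β₁ ∈ Ioo 0 (π / 2)) (hβ₂ : β₂ ∈ Ioo 0 (π / 2)) :
    |f (r₁ ^ α) β₁ - f (r₂ ^ α) β₂| ≤ (2 / (α * γ) * (π / 2) ^ (α * γ) + 1 / γ) * M *
      √((r₁ * cos β₁ - r₂ * cos β₂) ^ 2 + (r₁ * sin β₁ - r₂ * sin β₂) ^ 2) ^ (α * γ) := by
  wlog hr : r₁ ≤ r₂ generalizing r₁ r₂ β₁ β₂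
  · rw [abs_sub_comm, sub_sq_comm (r₁ * cos β₁), sub_sq_comm (r₁ * sin β₁)]
    exact this hr₂ hr₁ hβ₂ hβ₁ (le_of_not_ge hr)
  have hM : 0 ≤ M := hf.nonneg
  have hβ : |β₁ - β₂| ≤ π :=
    abs_le.2 ⟨by linarith [hβ₁.1, hβ₂.2, pi_pos], by linarith [hβ₁.2, hβ₂.1, pi_pos]⟩
  have hangle := radius_mul_abs_angle_sub_le_polar_dist hr₁.le hr hβ
  have hradius := abs_radius_sub_le_polar_dist (β₁ := β₁) (β₂ := β₂) hr₁.le hr₂.le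
  set d := √((r₁ * cos β₁ - r₂ * cos β₂) ^ 2 + (r₁ * sin β₁ - r₂ * sin β₂) ^ 2)
  calc |f (r₁ ^ α) β₁ - f (r₂ ^ α) β₂|
      ≤ |f (r₁ ^ α) β₁ - f (r₁ ^ α) β₂| + |f (r₁ ^ α) β₂ - f (r₂ ^ α) β₂| := abs_sub_le _ _ _
    _ ≤ 2 * M / (α * γ) * (r₁ * |β₁ - β₂|) ^ (α * γ) + M / γ * |r₁ - r₂| ^ (α * γ) :=
        add_le_add (hf.abs_angular_sub_le hα hγ hαγ hr₁ hβ₁ hβ₂)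
          (hf.abs_radial_sub_le hα hγ hγ1 hαγ hr₁ hr₂ hβ₂)
    _ ≤ 2 * M / (α * γ) * (π / 2 * d) ^ (α * γ) + M / γ * d ^ (α * γ) := by gcongr
    _ = (2 / (α * γ) * (π / 2) ^ (α * γ) + 1 / γ) * M * d ^ (α * γ) := by
        rw [Real.mul_rpow (by positivity) (Real.sqrt_nonneg _)]
        ring

end HasWeightedGradientBound

lemma supDom_nonneg (g : ℝ → ℝ → ℝ) : 0 ≤ supDom g :=
  Real.iSup_nonneg fun _ => Real.iSup_nonneg fun _ => abs_nonneg _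

lemma BddDom.abs_le_supDom {g : ℝ → ℝ → ℝ} (hg : BddDom g) {R β : ℝ} (hR : R ∈ Ioi (0 : ℝ))
    (hβ : β ∈ Ioo 0 (π / 2)) : |g R β| ≤ supDom g := by
  obtain ⟨M, hM⟩ := hg
  have hbdd : BddAbove (⋃ R : Ioi (0 : ℝ), range fun β : Ioo (0 : ℝ) (π / 2) => |g R β|) := by
    refine ⟨M, ?_⟩
    simp only [mem_upperBounds, mem_iUnion, mem_range]
    rintro _ ⟨R, β, rfl⟩
    exact hM R R.2 β β.2
  exact le_ciSup₂ (f := fun (R : Ioi (0 : ℝ)) (β : Ioo (0 : ℝ) (π / 2)) => |g R β|)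
    hbdd ⟨R, hR⟩ ⟨β, hβ⟩

lemma C1Fin.hasWeightedGradientBound {α : ℝ} {f : ℝ → ℝ → ℝ} (hfin : C1Fin α f)
    (hf : DifferentiableOn ℝ (Function.uncurry f) Qdom) :
    HasWeightedGradientBound α (1 / 40) (C1norm α f) f where
  differentiableOn := hf
  radial_le _ hR _ hβ := (hfin.2.1.abs_le_supDom hR hβ).trans <|
    (le_add_of_nonneg_left (supDom_nonneg f)).trans (le_add_of_nonneg_right (supDom_nonneg _))
  angular_le _ hR _ hβ := (hfin.2.2.abs_le_supDom hR hβ).trans <|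
    le_add_of_nonneg_left (add_nonneg (supDom_nonneg f) (supDom_nonneg _))

theorem C1_embeds_into_Holder_general {α γ : ℝ} (hα : 0 < α) (hγ : 0 < γ) (hγ1 : γ ≤ 1)
    (hαγ : α * γ ≤ 1) :
    ∃ C : ℝ, ∀ (f : ℝ → ℝ → ℝ) (M : ℝ), HasWeightedGradientBound α γ M f →
      ∀ x₁ y₁ x₂ y₂ : ℝ, 0 < x₁ → 0 < y₁ → 0 < x₂ → 0 < y₂ →
        |f ((x₁ ^ 2 + y₁ ^ 2) ^ (α / 2)) (arctan (y₁ / x₁))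
            - f ((x₂ ^ 2 + y₂ ^ 2) ^ (α / 2)) (arctan (y₂ / x₂))|
          ≤ C * M * √((x₁ - x₂) ^ 2 + (y₁ - y₂) ^ 2) ^ (α * γ) := by
  refine ⟨2 / (α * γ) * (π / 2) ^ (α * γ) + 1 / γ, fun f M hf x₁ y₁ x₂ y₂ hx₁ hy₁ hx₂ hy₂ => ?_⟩
  have hβ {x y : ℝ} (hx : 0 < x) (hy : 0 < y) : arctan (y / x) ∈ Ioo 0 (π / 2) :=
    ⟨arctan_pos.2 (by positivity), arctan_lt_pi_div_two _⟩
  have h := hf.abs_sub_le_polar_dist hα hγ hγ1 hαγ (r₁ := √(x₁ ^ 2 + y₁ ^ 2))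
    (r₂ := √(x₂ ^ 2 + y₂ ^ 2)) (by positivity) (by positivity) (hβ hx₁ hy₁) (hβ hx₂ hy₂)
  rwa [sqrt_mul_cos_arctan_div hx₁, sqrt_mul_cos_arctan_div hx₂, sqrt_mul_sin_arctan_div hx₁,
    sqrt_mul_sin_arctan_div hx₂, ← rpow_div_two_eq_sqrt _ (by positivity),
    ← rpow_div_two_eq_sqrt _ (by positivity)] at h

/-- the weighted `C¹` space embeds continuously into the Hölder
space `C^{α/40}` (in the Cartesian variables of the first quadrant). -/
theorem C1_embeds_into_Holder (α : ℝ) (hα : 0 < α) (hα' : α ≤ 1/10) :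
    ∃ C : ℝ, ∀ f : ℝ → ℝ → ℝ,
      ContDiffOn ℝ 1 (Function.uncurry f)
        (Set.Ioi (0:ℝ) ×ˢ Set.Icc (0:ℝ) (Real.pi/2)) →
      (∀ R : ℝ, 0 < R → f R (Real.pi/2) = 0) →
      C1Fin α f →
      ∀ x₁ y₁ x₂ y₂ : ℝ, 0 < x₁ → 0 < y₁ → 0 < x₂ → 0 < y₂ →
        |f ((x₁^2+y₁^2) ^ (α/2)) (Real.arctan (y₁/x₁))
            - f ((x₂^2+y₂^2) ^ (α/2)) (Real.arctan (y₂/x₂))|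
          ≤ C * C1norm α f * (Real.sqrt ((x₁-x₂)^2 + (y₁-y₂)^2)) ^ (α/40) := by
  obtain ⟨C, hC⟩ := C1_embeds_into_Holder_general (γ := 1 / 40) hα (by norm_num) (by norm_num)
    (by linarith)
  refine ⟨C, fun f hf _ hfin => ?_⟩
  simpa only [mul_one_div] using hC f _ <| hfin.hasWeightedGradientBound <|
    (hf.differentiableOn one_ne_zero).mono (prod_mono_right Ioo_subset_Icc_self)

end Paper
end
end
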